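/- For a connected graph G on n vertices, E_R(G) ≤ α(G) + sqrt( (n−1)(S(G) − α(G)²) ), where α(G) = sqrt( (Σ T_i²)/(Σ R_i²) ) and S(G) = Σ_{i,j} r_ij². Equality holds if and only if G is a complete graph. -/

import Mathlib

open Matrix BigOperators Finset

noncomputable def allOnes (V : Type*) : Matrix V V ℝ := Matrix.of fun _ _ => 1

/-- The resistance distance matrix of a connected graph, via the matrix
`X = (L + (1/n)J)⁻¹`: `r_ij = X_ii + X_jj - 2X_ij`. -/
noncomputable def resistMatrix {V : Type*} [Fintype V] [DecidableEq V]
    (G : SimpleGraph V) [DecidableRel G.Adj] : Matrix V V ℝ :=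
  Matrix.of fun i j =>
    (G.lapMatrix ℝ + (Fintype.card V : ℝ)⁻¹ • allOnes V)⁻¹ i i +
    (G.lapMatrix ℝ + (Fintype.card V : ℝ)⁻¹ • allOnes V)⁻¹ j j -
    2 * (G.lapMatrix ℝ + (Fintype.card V : ℝ)⁻¹ • allOnes V)⁻¹ i j

/-- `W` is the Moore-Penrose inverse of `L`. -/
def IsMoorePenrose {V : Type*} [Fintype V] [DecidableEq V] (L W : Matrix V V ℝ) : Prop :=
  L * W * L = L ∧ W * L * W = W ∧ (L * W)ᵀ = L * W ∧ (W * L)ᵀ = W * L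

/-- Resistance degree `R_i`. -/
noncomputable def rdeg {V : Type*} [Fintype V] [DecidableEq V]
    (G : SimpleGraph V) [DecidableRel G.Adj] (i : V) : ℝ :=
  ∑ j, resistMatrix G i j

/-- Second resistance degree `T_i`. -/
noncomputable def rdeg2 {V : Type*} [Fintype V] [DecidableEq V]
    (G : SimpleGraph V) [DecidableRel G.Adj] (i : V) : ℝ :=
  ∑ j, resistMatrix G i j * rdeg G j

section ResistanceMatrix

lemma allOnes_mulVec {V : Type*} [Fintype V] (x : V → ℝ) :
    allOnes V *ᵥ x = fun _ => ∑ i, x i := by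
  ext i
  simp [allOnes, mulVec, dotProduct]

variable {V : Type*} [Fintype V] [DecidableEq V] {G : SimpleGraph V} [DecidableRel G.Adj]

/-- The matrix `L + (1/n)J` whose inverse determines the resistance distances. -/
noncomputable def regLaplacian (G : SimpleGraph V) [DecidableRel G.Adj] : Matrix V V ℝ :=
  G.lapMatrix ℝ + (Fintype.card V : ℝ)⁻¹ • allOnes V

lemma resistMatrix_apply (i j : V) :
    resistMatrix G i j =
      (regLaplacian G)⁻¹ i i + (regLaplacian G)⁻¹ j j - 2 * (regLaplacian G)⁻¹ i j :=
  rfl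

lemma regLaplacian_apply_of_ne {i j : V} (hij : i ≠ j) :
    regLaplacian G i j = -(if G.Adj i j then 1 else 0) + (Fintype.card V : ℝ)⁻¹ := by
  simp [regLaplacian, SimpleGraph.lapMatrix, SimpleGraph.degMatrix, allOnes, hij]

lemma regLaplacian_posDef (hG : G.Connected) : (regLaplacian G).PosDef := by
  have := hG.nonempty
  have hcard : (0 : ℝ) < Fintype.card V := by exact_mod_cast Fintype.card_pos
  refine .of_dotProduct_mulVec_pos ?_ fun x hx => ?_
  · refine (G.isHermitian_lapMatrix ℝ).add ?_
    ext i j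
    simp [allOnes]
  have hform : star x ⬝ᵥ (regLaplacian G *ᵥ x) =
      x ⬝ᵥ (G.lapMatrix ℝ *ᵥ x) + (Fintype.card V : ℝ)⁻¹ * (∑ i, x i) ^ 2 := by
    rw [star_trivial, regLaplacian, add_mulVec, smul_mulVec, allOnes_mulVec, dotProduct_add,
      dotProduct_smul]
    simp [dotProduct, ← Finset.sum_mul, sq]
  have hL : 0 ≤ x ⬝ᵥ (G.lapMatrix ℝ *ᵥ x) := by
    simpa using (SimpleGraph.posSemidef_lapMatrix ℝ G).dotProduct_mulVec_nonneg x
  rw [hform]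
  have hJ : 0 ≤ (Fintype.card V : ℝ)⁻¹ * (∑ i, x i) ^ 2 := by positivity
  refine lt_of_le_of_ne (add_nonneg hL hJ) fun h0 => hx ?_
  have hL0 : x ⬝ᵥ (G.lapMatrix ℝ *ᵥ x) = 0 := by linarith
  have hJ0 : ∑ i, x i = 0 := by
    have : (Fintype.card V : ℝ)⁻¹ * (∑ i, x i) ^ 2 = 0 := by linarith
    simpa [hcard.ne'] using this
  rw [← toLinearMap₂'_apply',
    SimpleGraph.lapMatrix_toLinearMap₂'_apply'_eq_zero_iff_forall_reachable] at hL0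
  ext i
  have hconst : ∑ j, x j = Fintype.card V * x i := by
    rw [Finset.sum_congr rfl fun j _ => hL0 j i (hG.preconnected j i)]
    simp
  rw [hJ0] at hconst
  simpa [hcard.ne'] using hconst.symm

lemma regLaplacian_mul_inv (hG : G.Connected) : regLaplacian G * (regLaplacian G)⁻¹ = 1 :=
  mul_nonsing_inv _ ((isUnit_iff_isUnit_det _).mp (regLaplacian_posDef hG).isUnit)

lemma regLaplacian_inv_mul (hG : G.Connected) : (regLaplacian G)⁻¹ * regLaplacian G = 1 :=
  nonsing_inv_mul _ ((isUnit_iff_isUnit_det _).mp (regLaplacian_posDef hG).isUnit)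

lemma regLaplacian_mulVec_one [Nonempty V] : regLaplacian G *ᵥ (fun _ => 1) = fun _ => 1 := by
  rw [regLaplacian, add_mulVec, smul_mulVec, allOnes_mulVec,
    SimpleGraph.lapMatrix_mulVec_const_eq_zero]
  ext i
  simp

lemma regLaplacian_row_sum [Nonempty V] (i : V) : ∑ j, regLaplacian G i j = 1 := by
  simpa [mulVec, dotProduct] using congrFun (regLaplacian_mulVec_one (G := G)) i

lemma regLaplacian_inv_row_sum (hG : G.Connected) (i : V) :
    ∑ j, (regLaplacian G)⁻¹ i j = 1 := by
  have := hG.nonempty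
  have h := congrArg ((regLaplacian G)⁻¹ *ᵥ ·) (regLaplacian_mulVec_one (G := G))
  simp only [mulVec_mulVec, regLaplacian_inv_mul hG, one_mulVec] at h
  simpa [mulVec, dotProduct] using (congrFun h i).symm

lemma resistMatrix_diag (i : V) : resistMatrix G i i = 0 := by
  rw [resistMatrix_apply]
  ring

lemma resistMatrix_nonneg (hG : G.Connected) (i j : V) : 0 ≤ resistMatrix G i j := by
  have hX := (regLaplacian_posDef hG).inv
  have hsymm : (regLaplacian G)⁻¹ j i = (regLaplacian G)⁻¹ i j := by
    simpa using hX.isHermitian.apply i j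
  have h := hX.posSemidef.dotProduct_mulVec_nonneg (Pi.single i 1 - Pi.single j 1)
  simp only [star_trivial, mulVec_sub, mulVec_single_one, sub_dotProduct, single_one_dotProduct,
    Pi.sub_apply, col_apply] at h
  rw [resistMatrix_apply]
  linarith

lemma resistMatrix_neg_on_sum_zero (hG : G.Connected) {x : V → ℝ} (hx : x ≠ 0)
    (hsum : ∑ i, x i = 0) : x ⬝ᵥ (resistMatrix G *ᵥ x) < 0 := by
  have hX := (regLaplacian_posDef hG).inv.dotProduct_mulVec_pos hx
  rw [star_trivial] at hX
  have hmul : resistMatrix G *ᵥ x =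
      fun i => (∑ j, (regLaplacian G)⁻¹ j j * x j) - 2 * ((regLaplacian G)⁻¹ *ᵥ x) i := by
    ext i
    simp only [mulVec, dotProduct, resistMatrix_apply, sub_mul, add_mul, Finset.sum_sub_distrib,
      Finset.sum_add_distrib, ← Finset.mul_sum, hsum, mul_assoc]
    ring
  have : x ⬝ᵥ (resistMatrix G *ᵥ x) = -2 * (x ⬝ᵥ ((regLaplacian G)⁻¹ *ᵥ x)) := by
    rw [hmul]
    simp only [dotProduct, mul_sub, Finset.sum_sub_distrib, ← Finset.sum_mul, hsum]
    rw [zero_mul, zero_sub, Finset.mul_sum, ← Finset.sum_neg_distrib]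
    exact Finset.sum_congr rfl fun i _ => by ring
  linarith

/-- A connected graph whose resistance distances all agree is complete. -/
lemma eq_top_of_resistMatrix_eq_const (hG : G.Connected) {c : ℝ} (hc : 0 < c)
    (h : ∀ i j, i ≠ j → resistMatrix G i j = c) : G = ⊤ := by
  have := hG.nonempty
  have hcard : (0 : ℝ) < Fintype.card V := by exact_mod_cast Fintype.card_pos
  set X := (regLaplacian G)⁻¹ with hXdef
  have hrow (i : V) : Fintype.card V * X i i + (∑ j, X j j) - 2 = (Fintype.card V - 1) * c := by
    have h1 : ∑ j, resistMatrix G i j = (Fintype.card V - 1) * c := by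
      rw [← Finset.add_sum_erase _ _ (Finset.mem_univ i), resistMatrix_diag, zero_add,
        Finset.sum_congr rfl fun j hj => h i j (Finset.ne_of_mem_erase hj).symm]
      simp [Finset.card_erase_of_mem, Nat.cast_sub (Fintype.card_pos (α := V))]
    have h2 : ∑ j, resistMatrix G i j = Fintype.card V * X i i + (∑ j, X j j) - 2 := by
      simp only [resistMatrix_apply, Finset.sum_sub_distrib, Finset.sum_add_distrib,
        ← Finset.mul_sum, regLaplacian_inv_row_sum hG]
      simp [X]
    linarith
  obtain ⟨d, hdiag⟩ : ∃ d, ∀ i, X i i = d := by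
    obtain ⟨v⟩ := id this
    exact ⟨X v v, fun i => mul_left_cancel₀ hcard.ne' (by linarith [hrow i, hrow v])⟩
  have hX (k j : V) : X k j = (d - c / 2) + if k = j then c / 2 else 0 := by
    split_ifs with hkj
    · rw [hkj, hdiag]
      ring
    · have := h k j hkj
      rw [resistMatrix_apply, ← hXdef, hdiag k, hdiag j] at this
      linarith
  have hM (i j : V) (hij : i ≠ j) : c / 2 * regLaplacian G i j = -(d - c / 2) := by
    have h1 : (regLaplacian G * X) i j = 0 := by
      rw [hXdef, regLaplacian_mul_inv hG, one_apply_ne hij]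
    simp only [mul_apply, hX, mul_add, Finset.sum_add_distrib, ← Finset.sum_mul,
      regLaplacian_row_sum] at h1
    simp at h1
    linarith
  have hadj (i j k l : V) (hij : i ≠ j) (hkl : k ≠ l) (ha : G.Adj i j) : G.Adj k l := by
    by_contra hn
    have h1 := hM i j hij
    rw [← hM k l hkl, regLaplacian_apply_of_ne hij, regLaplacian_apply_of_ne hkl, if_pos ha,
      if_neg hn] at h1
    linarith
  ext i j
  refine ⟨fun ha => ha.ne, fun hij => ?_⟩
  have hij : i ≠ j := hij
  have : Nontrivial V := ⟨i, j, hij⟩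
  obtain ⟨w, hw⟩ := hG.preconnected.exists_adj_of_nontrivial i
  exact hadj i w i j hw.ne hij hw

lemma resistMatrix_top {i j : V} (hij : i ≠ j) [DecidableRel (⊤ : SimpleGraph V).Adj] :
    resistMatrix (⊤ : SimpleGraph V) i j = 2 / Fintype.card V := by
  have : Nonempty V := ⟨i⟩
  have hcard : (0 : ℝ) < Fintype.card V := by exact_mod_cast Fintype.card_pos
  set N : ℝ := (Fintype.card V : ℝ) with hN
  have hL : regLaplacian (⊤ : SimpleGraph V) = N • (1 : Matrix V V ℝ) + (N⁻¹ - 1) • allOnes V := by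
    ext k l
    rcases eq_or_ne k l with rfl | hkl
    · have hdeg : ((⊤ : SimpleGraph V).degree k : ℝ) = N - 1 := by
        rw [show (⊤ : SimpleGraph V).degree k = Fintype.card V - 1 by
            convert SimpleGraph.complete_graph_degree k,
          Nat.cast_sub (Fintype.card_pos (α := V)), Nat.cast_one]
      simp [regLaplacian, SimpleGraph.lapMatrix, SimpleGraph.degMatrix, allOnes, hdeg, ← hN]
      ring
    · rw [regLaplacian_apply_of_ne hkl]
      simp [hkl, allOnes, N]
      ring
  have hJ : allOnes V * allOnes V = N • allOnes V := by
    ext k l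
    simp [allOnes, mul_apply, N]
  have hX : (regLaplacian (⊤ : SimpleGraph V))⁻¹ =
      N⁻¹ • (1 : Matrix V V ℝ) + (N⁻¹ - N⁻¹ * N⁻¹) • allOnes V := by
    refine inv_eq_right_inv ?_
    rw [hL]
    simp only [add_mul, mul_add, smul_mul_assoc, mul_smul_comm, one_mul, mul_one, hJ, smul_smul]
    match_scalars <;> field_simp
    ring
  rw [resistMatrix_apply, hX]
  simp [hij, allOnes]
  ring

end ResistanceMatrix

section Spectral

variable {V : Type*} [Fintype V] [DecidableEq V] {A : Matrix V V ℝ}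

lemma Matrix.IsHermitian.exists_orthogonal_diagonalization (hA : A.IsHermitian) :
    ∃ U : Matrix V V ℝ, U * Uᵀ = 1 ∧ Uᵀ * U = 1 ∧ A = U * diagonal hA.eigenvalues * Uᵀ := by
  refine ⟨hA.eigenvectorUnitary, ?_, ?_, ?_⟩
  · simpa [star_eq_conjTranspose] using Unitary.coe_mul_star_self hA.eigenvectorUnitary
  · simpa [star_eq_conjTranspose] using Unitary.coe_star_mul_self hA.eigenvectorUnitary
  · simpa [Unitary.conjStarAlgAut_apply, star_eq_conjTranspose, Function.comp_def]
      using hA.spectral_theorem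

lemma Matrix.IsHermitian.sum_eigenvalues (hA : A.IsHermitian) :
    ∑ i, hA.eigenvalues i = ∑ i, A i i := by
  simpa [trace] using hA.trace_eq_sum_eigenvalues.symm

lemma Matrix.IsHermitian.sum_eigenvalues_sq (hA : A.IsHermitian) :
    ∑ i, hA.eigenvalues i ^ 2 = ∑ i, ∑ j, A i j ^ 2 := by
  obtain ⟨U, -, hU, h⟩ := hA.exists_orthogonal_diagonalization
  have h1 : (A * A).trace = ∑ i, ∑ j, A i j ^ 2 := by
    simp only [trace, diag_apply, mul_apply, sq]
    refine Finset.sum_congr rfl fun i _ => Finset.sum_congr rfl fun j _ => ?_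
    rw [show A j i = A i j by simpa using hA.apply i j]
  have h2 : A * A = U * (diagonal hA.eigenvalues * diagonal hA.eigenvalues * Uᵀ) := by
    nth_rewrite 1 2 [h]
    calc _ = U * diagonal hA.eigenvalues * (Uᵀ * U) * diagonal hA.eigenvalues * Uᵀ := by
          simp only [Matrix.mul_assoc]
      _ = _ := by rw [hU]; simp only [Matrix.mul_assoc, Matrix.mul_one]
  rw [← h1, h2, trace_mul_comm, Matrix.mul_assoc, hU, Matrix.mul_one, diagonal_mul_diagonal,
    trace_diagonal]
  exact Finset.sum_congr rfl fun i _ => sq _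

lemma Matrix.IsHermitian.sum_mulVec_sq_le (hA : A.IsHermitian) {r : ℝ}
    (hr : ∀ i, |hA.eigenvalues i| ≤ r) (x : V → ℝ) :
    ∑ i, (A *ᵥ x) i ^ 2 ≤ r ^ 2 * ∑ i, x i ^ 2 := by
  obtain ⟨U, hU', hU, h⟩ := hA.exists_orthogonal_diagonalization
  have norm_eq (B : Matrix V V ℝ) (hB : Bᵀ * B = 1) (y : V → ℝ) :
      ∑ i, (B *ᵥ y) i ^ 2 = ∑ i, y i ^ 2 := by
    have : (B *ᵥ y) ⬝ᵥ (B *ᵥ y) = y ⬝ᵥ y := by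
      rw [dotProduct_mulVec, vecMul_mulVec, dotProduct_comm, hB, vecMul_one]
    simpa [dotProduct, sq] using this
  have h1 : A *ᵥ x = U *ᵥ (diagonal hA.eigenvalues *ᵥ (Uᵀ *ᵥ x)) := by
    rw [mulVec_mulVec, mulVec_mulVec, ← h]
  rw [h1, norm_eq U hU, ← norm_eq Uᵀ (by rwa [transpose_transpose]) x, Finset.mul_sum]
  refine Finset.sum_le_sum fun i _ => ?_
  rw [mulVec_diagonal, mul_pow]
  exact mul_le_mul_of_nonneg_right (sq_le_sq' (neg_le_of_abs_le (hr i)) (le_of_abs_le (hr i)))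
    (sq_nonneg _)

/-- A symmetric matrix that is negative definite on the sum-zero vectors has at most one
nonnegative eigenvalue. -/
lemma Matrix.IsHermitian.eigenvalues_neg_of_ne (hA : A.IsHermitian)
    (hneg : ∀ x : V → ℝ, x ≠ 0 → ∑ i, x i = 0 → x ⬝ᵥ (A *ᵥ x) < 0)
    {i j : V} (hi : 0 ≤ hA.eigenvalues i) (hij : j ≠ i) : hA.eigenvalues j < 0 := by
  by_contra! hj
  obtain ⟨U, hU', hU, h⟩ := hA.exists_orthogonal_diagonalization
  have hUinj {y : V → ℝ} (hy : U *ᵥ y = 0) : y = 0 := by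
    rw [← one_mulVec y, ← hU, ← mulVec_mulVec, hy, mulVec_zero]
  have hform (y : V → ℝ) :
      (U *ᵥ y) ⬝ᵥ (A *ᵥ (U *ᵥ y)) = ∑ k, hA.eigenvalues k * y k ^ 2 := by
    have : A *ᵥ (U *ᵥ y) = U *ᵥ (diagonal hA.eigenvalues *ᵥ y) := by
      nth_rewrite 1 [h]
      rw [mulVec_mulVec, mulVec_mulVec, Matrix.mul_assoc, hU, Matrix.mul_one]
    rw [this, dotProduct_mulVec, vecMul_mulVec, dotProduct_comm, hU, vecMul_one]
    simp only [dotProduct, mulVec_diagonal]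
    exact Finset.sum_congr rfl fun k _ => by ring
  have key (a b : ℝ) (hab : a ≠ 0 ∨ b ≠ 0) :
      ∑ k, (U *ᵥ (Pi.single i a + Pi.single j b)) k ≠ 0 := by
    intro hs
    have hne : U *ᵥ (Pi.single i a + Pi.single j b) ≠ 0 := by
      intro h0
      have h0 := hUinj h0
      have hi0 := congrFun h0 i
      have hj0 := congrFun h0 j
      simp [hij, hij.symm] at hi0 hj0
      simp [hi0, hj0] at hab
    have hlt := hneg _ hne hs
    rw [hform] at hlt
    refine hlt.not_ge (Finset.sum_nonneg fun k _ => ?_)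
    by_cases hki : k = i
    · subst hki
      positivity
    by_cases hkj : k = j
    · subst hkj
      positivity
    simp [hki, hkj]
  have hlin (a b : ℝ) : ∑ k, (U *ᵥ (Pi.single i a + Pi.single j b)) k =
      a * (∑ k, U k i) + b * ∑ k, U k j := by
    simp [mulVec_add, Finset.sum_add_distrib, Finset.mul_sum]
  have h1 := key 1 0 (by simp)
  rw [hlin] at h1
  have h2 := key (∑ k, U k j) (-∑ k, U k i) (by right; simpa using h1)
  rw [hlin] at h2
  exact h2 (by ring)

/-- If all eigenvalues but one are equal to `-c`, then a symmetric entrywise nonnegative matrix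
with zero diagonal has all its off-diagonal entries equal to `c`. -/
lemma Matrix.IsHermitian.apply_eq_of_eigenvalues_eq_neg (hA : A.IsHermitian)
    (hdiag : ∀ i, A i i = 0) (hnonneg : ∀ i j, 0 ≤ A i j) {c : ℝ} (hc : 0 ≤ c) {i₀ : V}
    (heig : ∀ i, i ≠ i₀ → hA.eigenvalues i = -c) {i j : V} (hij : i ≠ j) : A i j = c := by
  obtain ⟨U, hU', hU, h⟩ := hA.exists_orthogonal_diagonalization
  have hrank (k l : V) : A k l + c * (1 : Matrix V V ℝ) k l =
      (hA.eigenvalues i₀ + c) * (U k i₀ * U l i₀) := by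
    rw [← hU']
    nth_rewrite 1 [h]
    rw [mul_apply, mul_apply]
    simp only [mul_diagonal, transpose_apply, Finset.mul_sum]
    rw [← Finset.sum_add_distrib, Finset.sum_eq_single i₀]
    · ring
    · intro m _ hm
      rw [heig m hm]
      ring
    · simp
  have hi := hrank i i
  have hj := hrank j j
  have hij' := hrank i j
  simp only [hdiag, one_apply_eq, one_apply_ne hij] at hi hj hij'
  have hsq : A i j ^ 2 = c ^ 2 := by
    calc A i j ^ 2 = (A i j + c * 0) ^ 2 := by ring
      _ = (0 + c * 1) * (0 + c * 1) := by
        rw [hij']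
        nth_rewrite 1 [hi]
        rw [hj]
        ring
      _ = c ^ 2 := by ring
  exact (pow_left_inj₀ (hnonneg i j) hc two_ne_zero).mp hsq

lemma Matrix.IsHermitian.exists_eigenvector (hA : A.IsHermitian) (k : V) :
    ∃ u : V → ℝ, u ≠ 0 ∧ A *ᵥ u = hA.eigenvalues k • u :=
  ⟨_, fun h => hA.eigenvectorBasis.orthonormal.ne_zero k (by ext i; exact congrFun h i),
    hA.mulVec_eigenvectorBasis k⟩

lemma Matrix.IsHermitian.eigenvalues_eq_of_apply_eq (hA : A.IsHermitian)
    (hdiag : ∀ i, A i i = 0) {c : ℝ} (hc : 0 < c) (hoff : ∀ i j, i ≠ j → A i j = c) {k : V}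
    (hk : 0 ≤ hA.eigenvalues k) : hA.eigenvalues k = (Fintype.card V - 1) * c := by
  obtain ⟨u, hu, heq⟩ := hA.exists_eigenvector k
  set r := hA.eigenvalues k
  have hrow (i : V) : (r + c) * u i = c * ∑ j, u j := by
    have h1 := congrFun heq i
    have hAij (j : V) : A i j = c - if i = j then c else 0 := by
      split_ifs with hij
      · rw [← hij, hdiag, sub_self]
      · rw [hoff i j hij, sub_zero]
    simp [mulVec, dotProduct, hAij, sub_mul, Finset.sum_sub_distrib, ← Finset.mul_sum] at h1
    linarith
  have hsum : (r + c) * ∑ j, u j = Fintype.card V * c * ∑ j, u j := by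
    rw [Finset.mul_sum, Finset.sum_congr rfl fun j _ => hrow j]
    simp [mul_assoc]
  have hne : ∑ j, u j ≠ 0 := by
    intro h0
    refine hu (funext fun i => ?_)
    have := hrow i
    rw [h0, mul_zero] at this
    exact (mul_eq_zero.mp this).resolve_left (by positivity)
  linarith [mul_right_cancel₀ hne hsum]

end Spectral

lemma sq_two_mul_sub_add_le {m r a S : ℝ} (hr : 0 < r) (ha : 0 ≤ a) (har : a ≤ r)
    (hra : r ^ 2 ≤ (m - 1) * a ^ 2) (hm' : m = 2 ∨ 3 ≤ m) :
    (2 * r - a) ^ 2 + ((m - 1) * S - m * r ^ 2) ≤ (m - 1) * (S - a ^ 2) := by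
  have h : 0 ≤ (m - 4) * r + m * a := by
    rcases hm' with rfl | h3
    · have : r ≤ a := (pow_le_pow_iff_left₀ hr.le ha two_ne_zero).mp (by linarith)
      linarith
    · by_cases h4 : 4 ≤ m
      · have := mul_nonneg (sub_nonneg.mpr h4) hr.le
        have := mul_nonneg (by linarith : 0 ≤ m) ha
        linarith
      · have h1 : r ^ 2 ≤ (3 * a) ^ 2 := by nlinarith [sq_nonneg a]
        have h2 : r ≤ 3 * a := (pow_le_pow_iff_left₀ hr.le (by positivity) two_ne_zero).mp h1
        nlinarith
  nlinarith [mul_nonneg (sub_nonneg.mpr har) h]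

theorem resistance_energy_upper_bound
    (n : ℕ) (G : SimpleGraph (Fin n)) [DecidableRel G.Adj]
    (hG : G.Connected) (hR : (resistMatrix G).IsHermitian) :
    (∑ i, |hR.eigenvalues i|) ≤
      Real.sqrt ((∑ i, rdeg2 G i ^ 2) / (∑ i, rdeg G i ^ 2)) +
        Real.sqrt (((n : ℝ) - 1) *
          ((∑ i, ∑ j, resistMatrix G i j ^ 2) -
            (∑ i, rdeg2 G i ^ 2) / (∑ i, rdeg G i ^ 2))) ∧
    ((∑ i, |hR.eigenvalues i|) =
      Real.sqrt ((∑ i, rdeg2 G i ^ 2) / (∑ i, rdeg G i ^ 2)) +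
        Real.sqrt (((n : ℝ) - 1) *
          ((∑ i, ∑ j, resistMatrix G i j ^ 2) -
            (∑ i, rdeg2 G i ^ 2) / (∑ i, rdeg G i ^ 2))) ↔
      G = ⊤) := by
  have hne := hG.nonempty
  have hn0 : n ≠ 0 := by
    rintro rfl
    exact hne.elim Fin.elim0
  have hsum0 : ∑ i, hR.eigenvalues i = 0 := by
    rw [hR.sum_eigenvalues]
    exact Finset.sum_eq_zero fun i _ => resistMatrix_diag i
  obtain rfl | hn : n = 1 ∨ 2 ≤ n := by omega
  · have hA (i j : Fin 1) : resistMatrix G i j = 0 := by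
      rw [Subsingleton.elim i j, resistMatrix_diag]
    have hE : hR.eigenvalues 0 = 0 := by simpa using hsum0
    have hE' (i : Fin 1) : hR.eigenvalues i = 0 := by rw [Subsingleton.elim i 0, hE]
    simpa [hA, hE', rdeg, rdeg2] using Subsingleton.elim G ⊤
  have hnR : (2 : ℝ) ≤ n := by exact_mod_cast hn
  have hnR' : (n : ℝ) = 2 ∨ (3 : ℝ) ≤ n := by
    obtain rfl | h3 : n = 2 ∨ 3 ≤ n := by omega
    · simp
    · right
      exact_mod_cast h3
  have : Nontrivial (Fin n) := Fin.nontrivial_iff_two_le.mpr hn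
  obtain ⟨i₀, -, hi₀⟩ : ∃ i ∈ Finset.univ, 0 ≤ hR.eigenvalues i :=
    Finset.exists_le_of_sum_le Finset.univ_nonempty (by simp [hsum0])
  have hlt (j : Fin n) (hj : j ≠ i₀) : hR.eigenvalues j < 0 :=
    hR.eigenvalues_neg_of_ne (fun x hx hs => resistMatrix_neg_on_sum_zero hG hx hs) hi₀ hj
  set r := hR.eigenvalues i₀ with hr
  have hrest : ∑ j ∈ Finset.univ.erase i₀, hR.eigenvalues j = -r := by
    have := Finset.add_sum_erase _ hR.eigenvalues (Finset.mem_univ i₀)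
    linarith
  have hrest_abs : ∑ j ∈ Finset.univ.erase i₀, |hR.eigenvalues j| = r := by
    rw [Finset.sum_congr rfl fun j hj => abs_of_neg (hlt j (Finset.ne_of_mem_erase hj)),
      Finset.sum_neg_distrib, hrest, neg_neg]
  have hrpos : 0 < r := by
    obtain ⟨j, hj⟩ := exists_ne i₀
    have hjmem : j ∈ Finset.univ.erase i₀ := by simp [hj]
    have := Finset.single_le_sum (f := fun j => |hR.eigenvalues j|)
      (fun _ _ => abs_nonneg _) hjmem
    have := abs_pos.mpr (hlt j hj).ne
    linarith
  have habs (j : Fin n) : |hR.eigenvalues j| ≤ r := by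
    by_cases hj : j = i₀
    · rw [hj, abs_of_nonneg hi₀]
    · rw [← hrest_abs]
      exact Finset.single_le_sum (f := fun j => |hR.eigenvalues j|)
        (fun _ _ => abs_nonneg _) (by simp [hj])
  have hE : ∑ i, |hR.eigenvalues i| = 2 * r := by
    rw [← Finset.add_sum_erase _ _ (Finset.mem_univ i₀), hrest_abs, abs_of_nonneg hi₀]
    ring
  set S := ∑ i, ∑ j, resistMatrix G i j ^ 2 with hS
  have hSeig : S = r ^ 2 + ∑ j ∈ Finset.univ.erase i₀, hR.eigenvalues j ^ 2 := by
    rw [hS, ← hR.sum_eigenvalues_sq, ← Finset.add_sum_erase _ _ (Finset.mem_univ i₀)]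
  have hvar : ((n : ℝ) - 1) * ∑ j ∈ Finset.univ.erase i₀,
      (hR.eigenvalues j + r / (n - 1)) ^ 2 = (n - 1) * S - n * r ^ 2 := by
    have hn1 : (n : ℝ) - 1 ≠ 0 := by linarith
    have hcard : ((Finset.univ.erase i₀).card : ℝ) = n - 1 := by
      rw [Finset.card_erase_of_mem (Finset.mem_univ _), Finset.card_univ, Fintype.card_fin,
        Nat.cast_sub (by omega), Nat.cast_one]
    simp only [add_sq, Finset.sum_add_distrib, ← Finset.sum_mul, ← Finset.mul_sum, hrest,
      Finset.sum_const, nsmul_eq_mul, hcard, hSeig]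
    field_simp
    ring
  have hCS : 0 ≤ ((n : ℝ) - 1) * S - n * r ^ 2 := by
    rw [← hvar]
    exact mul_nonneg (by linarith) (Finset.sum_nonneg fun _ _ => sq_nonneg _)
  set Q := ∑ i, rdeg G i ^ 2 with hQ
  set P := ∑ i, rdeg2 G i ^ 2 with hP
  have hSQ : S ≤ Q := Finset.sum_le_sum fun i _ =>
    Finset.sum_sq_le_sq_sum_of_nonneg fun j _ => resistMatrix_nonneg hG i j
  have hSpos : 0 < S := by
    rw [hSeig]
    positivity
  have hQpos : 0 < Q := hSpos.trans_le hSQ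
  have hQT : Q = ∑ i, rdeg2 G i := by
    simp only [hQ, rdeg2, sq]
    rw [Finset.sum_comm]
    refine Finset.sum_congr rfl fun i _ => ?_
    rw [← Finset.sum_mul]
    congr 1
    exact Finset.sum_congr rfl fun j _ => by simpa using hR.apply j i
  have hQP : Q ^ 2 ≤ n * P := by
    rw [hQT]
    simpa using sq_sum_le_card_mul_sum_sq (s := Finset.univ) (f := rdeg2 G)
  have hSα : S ≤ n * (P / Q) := by
    refine hSQ.trans ?_
    rw [← mul_div_assoc, le_div_iff₀ hQpos]
    linarith
  have hαr : P / Q ≤ r ^ 2 := by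
    rw [div_le_iff₀ hQpos]
    exact hR.sum_mulVec_sq_le habs (rdeg G)
  have hα0 : 0 ≤ P / Q := div_nonneg (Finset.sum_nonneg fun _ _ => sq_nonneg _) hQpos.le
  rw [hE]
  set a := Real.sqrt (P / Q) with ha
  have ha2 : P / Q = a ^ 2 := (Real.sq_sqrt hα0).symm
  have ha0 : 0 ≤ a := Real.sqrt_nonneg _
  rw [ha2] at hSα hαr ⊢
  have har : a ≤ r := (pow_le_pow_iff_left₀ ha0 hrpos.le two_ne_zero).mp hαr
  have hra : r ^ 2 ≤ ((n : ℝ) - 1) * a ^ 2 := by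
    have h1 : (n : ℝ) * r ^ 2 ≤ n * ((n - 1) * a ^ 2) := by nlinarith
    exact le_of_mul_le_mul_left h1 (by linarith)
  have hmain := sq_two_mul_sub_add_le (S := S) hrpos ha0 har hra hnR'
  have hroot : 2 * r - a ≤ Real.sqrt ((n - 1) * (S - a ^ 2)) :=
    Real.le_sqrt_of_sq_le (by linarith)
  refine ⟨by linarith, fun heq => ?_, fun htop => ?_⟩
  · have h1 : Real.sqrt ((n - 1) * (S - a ^ 2)) = 2 * r - a := by linarith
    have h2 : ((n : ℝ) - 1) * (S - a ^ 2) = (2 * r - a) ^ 2 := by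
      rw [← h1]
      refine (Real.sq_sqrt ?_).symm
      linarith [sq_nonneg (2 * r - a)]
    have h3 : ∑ j ∈ Finset.univ.erase i₀, (hR.eigenvalues j + r / (n - 1)) ^ 2 = 0 := by
      refine (mul_eq_zero.mp (?_ : ((n : ℝ) - 1) * _ = 0)).resolve_left (by linarith)
      linarith
    have hc : 0 < r / ((n : ℝ) - 1) := div_pos hrpos (by linarith)
    refine eq_top_of_resistMatrix_eq_const hG hc fun i j hij =>
      hR.apply_eq_of_eigenvalues_eq_neg resistMatrix_diag (resistMatrix_nonneg hG) hc.le
        (i₀ := i₀) (fun k hk => ?_) hij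
    have h4 := (Finset.sum_eq_zero_iff_of_nonneg fun _ _ => sq_nonneg _).mp h3 k (by simp [hk])
    linarith [pow_eq_zero_iff two_ne_zero |>.mp h4]
  · have hoff (i j : Fin n) (hij : i ≠ j) : resistMatrix G i j = 2 / n := by
      subst htop
      simpa using resistMatrix_top hij
    have hrval : r = (n - 1) * (2 / n) := by
      simpa using hR.eigenvalues_eq_of_apply_eq resistMatrix_diag
        (div_pos two_pos (by linarith)) hoff hi₀
    have hentry (i j : Fin n) : resistMatrix G i j = 2 / n - if i = j then 2 / (n : ℝ) else 0 := by
      split_ifs with hij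
      · rw [hij, resistMatrix_diag, sub_self]
      · rw [hoff i j hij, sub_zero]
    have hdeg (i : Fin n) : rdeg G i = r := by
      simp only [rdeg, hentry, Finset.sum_sub_distrib, Finset.sum_const, Finset.card_univ,
        Fintype.card_fin, nsmul_eq_mul, Finset.sum_ite_eq, Finset.mem_univ, if_true, hrval]
      ring
    have hdeg2 (i : Fin n) : rdeg2 G i = r ^ 2 := by
      simp only [rdeg2, hdeg, ← Finset.sum_mul]
      rw [show ∑ j, resistMatrix G i j = r from hdeg i, sq]
    have har' : a = r := by
      refine (pow_left_inj₀ ha0 hrpos.le two_ne_zero).mp ?_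
      rw [← ha2, div_eq_iff hQpos.ne', hP, hQ, Finset.mul_sum]
      exact Finset.sum_congr rfl fun i _ => by rw [hdeg, hdeg2, sq]
    have hSval : S = n * r * (2 / n) := by
      have hsq (i j : Fin n) : resistMatrix G i j ^ 2 = resistMatrix G i j * (2 / n) := by
        rw [hentry]
        split_ifs <;> ring
      simp only [hS, hsq, ← Finset.sum_mul]
      change (∑ i, rdeg G i) * _ = _
      simp [hdeg]
    have hroot' : ((n : ℝ) - 1) * (S - a ^ 2) = r ^ 2 := by
      have : (n : ℝ) ≠ 0 := by linarith
      rw [har', hSval, hrval]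
      field_simp
      ring
    rw [hroot', Real.sqrt_sq hrpos.le, har']
    ring
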